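/- arXiv:1911.11850 — 2 statements merged into one kernel-verified Lean document; each statement's English description precedes it below -/
import Mathlib

section
/- If ε : ℕ → ZMod 2 satisfies the Adem constraints and ε(2) = 0, then ε(r) = 0 for every even natural number r ≥ 2. -/
/-- `E ε s d` is the sum over all `s`-tuples of naturals summing to `d` of the
products of the values of `ε`, in `ZMod 2`. -/
def E (ε : ℕ → ZMod 2) (s d : ℕ) : ZMod 2 :=
  ∑ f ∈ Finset.Nat.antidiagonalTuple s d, ∏ j, ε (f j)

/-- `ε` satisfies the Adem constraints encoding the Adem relations among the
Dyer-Lashof operations on `F₂[u]` with `Q^{2r} u = ε r • u^{r+1}`. -/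
def AdemConstraints (ε : ℕ → ZMod 2) : Prop :=
  ε 0 = 0 ∧ ε 1 = 1 ∧ ∀ s r : ℕ, r > 2 * s →
    ε s * E ε (s + 1) r =
      ∑ i ∈ (Finset.Icc (s + 1) (r - s - 1)).filter (fun i => r ≤ 2 * i),
        ((Nat.choose (i - s - 1) (2 * i - r) : ZMod 2) * ε i * E ε (i + 1) (r + s - i))

/-!
Since `ε 0 = 0`, a tuple contributes to `E ε s d` only if all its entries are positive. Hence
`E ε (i + 1) (r + s - i)` vanishes unless `2 * i < r + s`, and together with `r ≤ 2 * i` this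
leaves very few terms on the right of the Adem constraint when `s` is small. For `s = 2` and
`r = 2 * m + 5` only `i = m + 3` survives, with binomial coefficient `m` and
`E ε (m + 4) (m + 4) = 1`, so the constraint reads `ε 2 * E ε 3 (2 * m + 5) = m * ε (m + 3)`.
For odd `m`, `ε 2 = 0` therefore forces `ε (m + 3) = 0`.
-/

lemma exists_eq_zero_of_sum_le_card {ι : Type*} [Fintype ι] {f : ι → ℕ}
    (hsum : ∑ j, f j ≤ Fintype.card ι) (hne : f ≠ 1) : ∃ j, f j = 0 := by
  by_contra! hf
  have hpos : ∀ j ∈ Finset.univ, 1 ≤ f j := fun j _ => Nat.one_le_iff_ne_zero.2 (hf j)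
  have hsum_one : ∑ _j : ι, 1 = ∑ j, f j :=
    le_antisymm (Finset.sum_le_sum hpos) (by simpa using hsum)
  have hone := (Finset.sum_eq_sum_iff_of_le hpos).1 hsum_one
  exact hne (funext fun j => (hone j (Finset.mem_univ j)).symm)

lemma prod_comp_eq_zero_of_sum_le_card {ι M : Type*} [Fintype ι] [CommMonoidWithZero M]
    {a : ℕ → M} (ha : a 0 = 0) {f : ι → ℕ} (hsum : ∑ j, f j ≤ Fintype.card ι) (hne : f ≠ 1) :
    ∏ j, a (f j) = 0 := by
  obtain ⟨j, hj⟩ := exists_eq_zero_of_sum_le_card hsum hne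
  exact Finset.prod_eq_zero (Finset.mem_univ j) (by rw [hj, ha])

lemma E_eq_zero_of_lt {ε : ℕ → ZMod 2} (h0 : ε 0 = 0) {s d : ℕ} (hds : d < s) : E ε s d = 0 := by
  refine Finset.sum_eq_zero fun f hf => ?_
  have hsum : ∑ j, f j = d := Finset.Nat.mem_antidiagonalTuple.1 hf
  refine prod_comp_eq_zero_of_sum_le_card h0 (by simpa [hsum] using hds.le) ?_
  rintro rfl
  exact hds.ne' (by simpa using hsum)

lemma E_self {ε : ℕ → ZMod 2} (h0 : ε 0 = 0) (s : ℕ) : E ε s s = ε 1 ^ s := by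
  have hone : (1 : Fin s → ℕ) ∈ Finset.Nat.antidiagonalTuple s s :=
    Finset.Nat.mem_antidiagonalTuple.2 (by simp)
  calc E ε s s = ∏ j, ε ((1 : Fin s → ℕ) j) :=
        Finset.sum_eq_single_of_mem 1 hone fun f hf hne =>
          prod_comp_eq_zero_of_sum_le_card h0
            (by simp [Finset.Nat.mem_antidiagonalTuple.1 hf]) hne
    _ = ε 1 ^ s := by simp

namespace AdemConstraints

variable {ε : ℕ → ZMod 2}

lemma E_self_eq_one (hε : AdemConstraints ε) (s : ℕ) : E ε s s = 1 := by
  rw [E_self hε.1, hε.2.1, one_pow]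

lemma two_mul_E_three (hε : AdemConstraints ε) (m : ℕ) :
    ε 2 * E ε 3 (2 * m + 5) = m * ε (m + 3) := by
  have hadem := hε.2.2 2 (2 * m + 5) (by omega)
  rw [Finset.sum_eq_single (m + 3)] at hadem
  · have hchoose : (m + 3 - 2 - 1).choose (2 * (m + 3) - (2 * m + 5)) = m := by
      rw [show 2 * (m + 3) - (2 * m + 5) = 1 by omega, Nat.choose_one_right]
      omega
    have hdegree : 2 * m + 5 + 2 - (m + 3) = m + 3 + 1 := by omega
    rwa [hchoose, hdegree, hε.E_self_eq_one, mul_one] at hadem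
  · intro i hi hne
    have hle : 2 * m + 5 ≤ 2 * i := (Finset.mem_filter.1 hi).2
    rw [E_eq_zero_of_lt hε.1 (by omega), mul_zero]
  · intro hmem
    -- The index `m + 3` is out of range only for `m = 0`, where its binomial coefficient is zero.
    obtain rfl : m = 0 := by
      simp only [Finset.mem_filter, Finset.mem_Icc] at hmem
      omega
    simp

end AdemConstraints

theorem stmt_1 (ε : ℕ → ZMod 2) (hε : AdemConstraints ε) (h2 : ε 2 = 0) :
    ∀ r : ℕ, 2 ≤ r → Even r → ε r = 0 := by
  intro r hr heven
  obtain rfl | hr4 : r = 2 ∨ 4 ≤ r := by grind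
  · exact h2
  obtain ⟨m, rfl⟩ : ∃ m, r = m + 3 := ⟨r - 3, by omega⟩
  have hm : (m : ZMod 2) = 1 := ZMod.natCast_eq_one_iff_odd.2 (by grind)
  simpa [h2, hm] using (hε.two_mul_E_three m).symm
end

section
/- For all natural numbers n ≥ 0 and q ≥ 1, the congruence Σ_{k=0}^{n} C(k, n−k) · C(n+3q, 2k+2q+1) ≡ C(n+3q, 2q−1) holds modulo 2, where C(a,b) denotes the binomial coefficient. -/
/-!
If `n + 3q` is even, every binomial coefficient `C(n + 3q, odd)` is even. Otherwise write
`n + 3q = 2M + 1` and `q = p + 1`; by Lucas' theorem the claim becomes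
`∑ k ≤ n, C(k, n - k) C(M, k + q) ≡ C(M, p)`, and both sides are the coefficient of `X ^ p` in
`(1 - X + X²) ^ M / (1 - X) ^ (p + 1)` modulo 2. For the left-hand side, expand
`(1 - X) + X²` by the binomial theorem. For the right-hand side, read the coefficient as the
residue at `0` of `(1 - t) ^ M / t ^ (p + 1)` with `t = X (1 - X)`: the Jacobian
`dt/dX = 1 - 2X` is `1` modulo 2, so it is also the coefficient of `t ^ p` in `(1 - t) ^ M`.
-/

section PowerSeriesCoefficients

open PowerSeries

variable {R : Type*} [CommRing R]

lemma coeff_one_sub_X_pow (n k : ℕ) :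
    coeff k ((1 - X : R⟦X⟧) ^ n) = (-1) ^ k * (n.choose k : R) := by
  have rescale_eq : (1 - X : R⟦X⟧) ^ n =
      rescale (-1) (((1 + Polynomial.X) ^ n : Polynomial R) : R⟦X⟧) := by
    simp [sub_eq_add_neg]
  rw [rescale_eq, coeff_rescale, Polynomial.coeff_coe, Polynomial.coeff_one_add_X_pow]

lemma coeff_one_sub_two_mul_X_mul_invOneSubPow (d : ℕ) :
    coeff d ((1 - 2 * X : R⟦X⟧) * (invOneSubPow R (d + 1)).val) = if d = 0 then 1 else 0 := by
  rw [invOneSubPow_val_succ_eq_mk_add_choose, sub_mul, one_mul, mul_assoc, two_mul, map_sub,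
    map_add]
  cases d with
  | zero => simp
  | succ e =>
    have central : (e + 1 + (e + 1)).choose (e + 1) = 2 * (e + 1 + e).choose (e + 1) := by
      rw [← add_assoc, Nat.choose_succ_succ', ← Nat.choose_symm_add, two_mul]
    rw [if_neg e.succ_ne_zero, coeff_succ_X_mul, coeff_mk, coeff_mk, central]
    push_cast
    ring

lemma coeff_X_mul_one_sub_X_pow_mul_jacobian_mul_invOneSubPow (j p : ℕ) :
    coeff p ((X * (1 - X) : R⟦X⟧) ^ j * ((1 - 2 * X) * (invOneSubPow R (p + 1)).val)) =
      if p = j then 1 else 0 := by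
  rw [mul_pow, mul_assoc, coeff_X_pow_mul']
  by_cases hj : j ≤ p
  · obtain ⟨d, rfl⟩ := Nat.exists_eq_add_of_le' hj
    rw [if_pos hj, mul_left_comm, add_right_comm,
      one_sub_pow_mul_invOneSubPow_val_add_eq_invOneSubPow_val, Nat.add_sub_cancel,
      coeff_one_sub_two_mul_X_mul_invOneSubPow]
    simp only [Nat.add_eq_right]
  · rw [if_neg hj, if_neg (by lia)]

lemma coeff_aeval_X_mul_one_sub_X_mul_jacobian_mul_invOneSubPow (f : Polynomial R) (p : ℕ) :
    coeff p (Polynomial.aeval (X * (1 - X) : R⟦X⟧) f *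
      ((1 - 2 * X) * (invOneSubPow R (p + 1)).val)) = f.coeff p := by
  induction f using Polynomial.induction_on' with
  | add f g hf hg => rw [map_add, add_mul, map_add, hf, hg, Polynomial.coeff_add]
  | monomial j r =>
    rw [Polynomial.aeval_monomial, ← Algebra.smul_def, smul_mul_assoc, coeff_smul,
      coeff_X_mul_one_sub_X_pow_mul_jacobian_mul_invOneSubPow, Polynomial.coeff_monomial,
      smul_eq_mul, mul_ite, mul_one, mul_zero]
    simp only [eq_comm]

lemma coeff_one_sub_X_add_X_sq_pow_mul_jacobian_mul_invOneSubPow (M p : ℕ) :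
    coeff p ((1 - X + X ^ 2 : R⟦X⟧) ^ M * ((1 - 2 * X) * (invOneSubPow R (p + 1)).val)) =
      (-1) ^ p * (M.choose p : R) := by
  have aeval_eq : (1 - X + X ^ 2 : R⟦X⟧) ^ M =
      Polynomial.aeval (X * (1 - X)) ((1 - Polynomial.X : Polynomial R) ^ M) := by
    simp only [map_pow, map_sub, map_one, Polynomial.aeval_X]
    ring
  rw [aeval_eq, coeff_aeval_X_mul_one_sub_X_mul_jacobian_mul_invOneSubPow,
    ← Polynomial.coeff_coe, ← coeff_one_sub_X_pow]
  simp

lemma coeff_X_sq_pow_mul_one_sub_X_pow_mul_invOneSubPow {i a j p : ℕ} (hj : 2 * j ≤ p)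
    (ha : a ≤ i) :
    coeff p ((X ^ 2 : R⟦X⟧) ^ j * ((1 - X) ^ i * (invOneSubPow R a).val)) =
      (-1) ^ p * ((i - a).choose (p - 2 * j) : R) := by
  have sign_eq : (-1 : R) ^ (p - 2 * j) = (-1) ^ p := by
    obtain ⟨r, rfl⟩ := Nat.exists_eq_add_of_le hj
    rw [Nat.add_sub_cancel_left, pow_add, pow_mul, neg_one_sq, one_pow, one_mul]
  obtain ⟨b, rfl⟩ := Nat.exists_eq_add_of_le' ha
  rw [one_sub_pow_add_mul_invOneSubPow_val_eq_one_sub_pow, ← pow_mul, coeff_X_pow_mul', if_pos hj,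
    coeff_one_sub_X_pow, sign_eq, Nat.add_sub_cancel]

lemma coeff_one_sub_X_add_X_sq_pow_mul_invOneSubPow {M a p : ℕ} (h : p + 2 * a ≤ 2 * M) :
    coeff p ((1 - X + X ^ 2 : R⟦X⟧) ^ M * (invOneSubPow R a).val) =
      (-1) ^ p * ∑ j ∈ Finset.range (p / 2 + 1),
        (M.choose j : R) * ((M - j - a).choose (p - 2 * j) : R) := by
  have coeff_expansion :
      coeff p ((1 - X + X ^ 2 : R⟦X⟧) ^ M * (invOneSubPow R a).val) =
        ∑ j ∈ Finset.range (M + 1), (M.choose j : R) *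
          coeff p ((X ^ 2 : R⟦X⟧) ^ j * ((1 - X) ^ (M - j) * (invOneSubPow R a).val)) := by
    rw [add_comm, add_pow, Finset.sum_mul, map_sum]
    refine Finset.sum_congr rfl fun j _ ↦ ?_
    rw [← coeff_C_mul, map_natCast]
    exact congrArg (coeff p) (by ring)
  rw [coeff_expansion, Finset.mul_sum]
  symm
  apply Finset.sum_subset_zero_on_sdiff (Finset.range_subset_range.mpr (by lia))
  · intro j hj
    simp only [Finset.mem_sdiff, Finset.mem_range] at hj
    rw [← pow_mul, coeff_X_pow_mul', if_neg (by lia), mul_zero]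
  · intro j hj
    rw [Finset.mem_range] at hj
    rw [coeff_X_sq_pow_mul_one_sub_X_pow_mul_invOneSubPow (by lia) (by lia), mul_left_comm]

end PowerSeriesCoefficients

-- The substitution is `j = M - (p + 1) - k`, for which `p - 2 * j = 2 * k - n`.
lemma sum_choose_mul_choose_add_eq {M n p : ℕ} (h : 2 * M = n + 3 * p + 2) :
    ∑ k ∈ Finset.range (n + 1), k.choose (n - k) * M.choose (k + (p + 1)) =
      ∑ j ∈ Finset.range (p / 2 + 1), M.choose j * (M - j - (p + 1)).choose (p - 2 * j) := by
  have bounds {k : ℕ} (hk : k.choose (n - k) * M.choose (k + (p + 1)) ≠ 0) :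
      n - k ≤ k ∧ k + (p + 1) ≤ M := by
    simpa only [ne_eq, mul_eq_zero, Nat.choose_eq_zero_iff, not_or, not_lt] using hk
  have summand_eq {k : ℕ} (hkn : k ≤ n) (hnk : n ≤ 2 * k) (hkM : k + (p + 1) ≤ M) :
      k.choose (n - k) * M.choose (k + (p + 1)) =
        M.choose (M - (p + 1) - k) *
          (M - (M - (p + 1) - k) - (p + 1)).choose (p - 2 * (M - (p + 1) - k)) := by
    rw [mul_comm, ← Nat.choose_symm hkM, ← Nat.choose_symm (by lia : n - k ≤ k)]
    congr 2 <;> lia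
  refine Finset.sum_bij_ne_zero (fun k _ _ ↦ M - (p + 1) - k) ?_ ?_ ?_ ?_
  · intro k hk hne
    have := bounds hne
    simp only [Finset.mem_range] at hk ⊢
    lia
  · intro k _ hk l _ hl hkl
    have := bounds hk
    have := bounds hl
    lia
  · intro j hj hne
    have hjk : p - 2 * j ≤ M - j - (p + 1) := by
      by_contra! hlt
      exact hne (by rw [Nat.choose_eq_zero_of_lt hlt, mul_zero])
    rw [Finset.mem_range] at hj
    have hj_eq : M - (p + 1) - (M - (p + 1) - j) = j := by lia
    refine ⟨M - (p + 1) - j, Finset.mem_range.mpr (by lia), ?_, hj_eq⟩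
    rwa [summand_eq (by lia) (by lia) (by lia), hj_eq]
  · intro k hk hne
    have := bounds hne
    rw [Finset.mem_range] at hk
    exact summand_eq (by lia) (by lia) (by lia)

open PowerSeries in
lemma sum_choose_mul_choose_add_modEq_two {M n p : ℕ} (h : 2 * M = n + 3 * p + 2) :
    ∑ k ∈ Finset.range (n + 1), k.choose (n - k) * M.choose (k + (p + 1)) ≡
      M.choose p [MOD 2] := by
  have jacobian_eq_one : (1 - 2 * X : (ZMod 2)⟦X⟧) = 1 := by
    rw [← map_ofNat (C (R := ZMod 2)) 2, CharTwo.two_eq_zero (R := ZMod 2), map_zero, zero_mul,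
      sub_zero]
  have change_of_variables :=
    coeff_one_sub_X_add_X_sq_pow_mul_jacobian_mul_invOneSubPow (R := ZMod 2) M p
  rw [jacobian_eq_one, one_mul, coeff_one_sub_X_add_X_sq_pow_mul_invOneSubPow (by lia),
    CharTwo.neg_eq, one_pow, one_mul, one_mul] at change_of_variables
  rw [sum_choose_mul_choose_add_eq h, ← ZMod.natCast_eq_natCast_iff]
  exact_mod_cast change_of_variables

lemma choose_two_mul_add_one_modEq_two (m k : ℕ) :
    (2 * m + 1).choose (2 * k + 1) ≡ m.choose k [MOD 2] := by
  have lucas := Choose.choose_modEq_choose_mod_mul_choose_div_nat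
    (n := 2 * m + 1) (k := 2 * k + 1) (p := 2)
  simpa [Nat.mul_add_mod, Nat.mul_add_div] using lucas

lemma two_mul_choose_two_mul_add_one_modEq_zero (m k : ℕ) :
    (2 * m).choose (2 * k + 1) ≡ 0 [MOD 2] := by
  have lucas := Choose.choose_modEq_choose_mod_mul_choose_div_nat
    (n := 2 * m) (k := 2 * k + 1) (p := 2)
  simpa [Nat.mul_add_mod] using lucas

theorem stmt_8 (n q : ℕ) (hq : 1 ≤ q) :
    (∑ k ∈ Finset.range (n + 1),
        Nat.choose k (n - k) * Nat.choose (n + 3 * q) (2 * k + 2 * q + 1)) ≡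
      Nat.choose (n + 3 * q) (2 * q - 1) [MOD 2] := by
  obtain ⟨p, rfl⟩ := Nat.exists_eq_add_of_le' hq
  have lower_left (k : ℕ) : 2 * k + 2 * (p + 1) + 1 = 2 * (k + (p + 1)) + 1 := by ring
  have lower_right : 2 * (p + 1) - 1 = 2 * p + 1 := by lia
  simp only [lower_left, lower_right]
  rcases Nat.even_or_odd' (n + 3 * (p + 1)) with ⟨M, hM | hM⟩
  · rw [hM]
    have summand_even (k : ℕ) :
        k.choose (n - k) * (2 * M).choose (2 * (k + (p + 1)) + 1) ≡ 0 [MOD 2] :=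
      (two_mul_choose_two_mul_add_one_modEq_zero M _).mul_left _
    exact (Nat.ModEq.sum_zero fun k _ ↦ summand_even k).trans
      (two_mul_choose_two_mul_add_one_modEq_zero M p).symm
  · rw [hM]
    calc
      ∑ k ∈ Finset.range (n + 1), k.choose (n - k) * (2 * M + 1).choose (2 * (k + (p + 1)) + 1)
        ≡ ∑ k ∈ Finset.range (n + 1), k.choose (n - k) * M.choose (k + (p + 1)) [MOD 2] :=
          .sum fun k _ ↦ (choose_two_mul_add_one_modEq_two M _).mul_left _
      _ ≡ M.choose p [MOD 2] := sum_choose_mul_choose_add_modEq_two (by lia)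
      _ ≡ (2 * M + 1).choose (2 * p + 1) [MOD 2] := (choose_two_mul_add_one_modEq_two M p).symm
end
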